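/- (Proposition: the second Bott–Chern form) In the Cholesky setting, Tr(𝚯²) = ∂̄∂ Tr(2θ₂θ̄₁ + θ₂θ̄₂); equivalently, the second Chern character form ch₂ = (1/2)Tr(𝚯²) satisfies ch₂ = ∂̄∂ bc₂ with bc₂ = (1/2)Tr(2θ₂θ̄₁ + θ₂θ̄₂). -/

import Mathlib

/-- An abstract model of the Dolbeault double complex of `(p,q)`-forms on a complex
manifold: a bigraded associative `ℂ`-algebra `Ω = ⨁ Ω^{p,q}`, graded-commutative with
respect to total degree, with `ℂ`-linear operators `∂` (`pd`) and `∂̄` (`pdb`) of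
bidegrees `(1,0)` and `(0,1)`, squaring to zero and anticommuting, satisfying the
graded Leibniz rule. -/
structure DolbeaultAlgebra (Ω : Type*) [Ring Ω] [Algebra ℂ Ω] where
  /-- the `ℂ`-subspace of elements of bidegree `(p,q)` -/
  deg : ℕ → ℕ → Submodule ℂ Ω
  one_mem : (1 : Ω) ∈ deg 0 0
  mul_mem : ∀ {p q p' q'} {a b : Ω}, a ∈ deg p q → b ∈ deg p' q' →
    a * b ∈ deg (p + p') (q + q')
  gcomm : ∀ {p q p' q'} (a b : Ω), a ∈ deg p q → b ∈ deg p' q' →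
    a * b = ((-1 : ℂ) ^ ((p + q) * (p' + q'))) • (b * a)
  /-- the operator `∂` -/
  pd : Ω →ₗ[ℂ] Ω
  /-- the operator `∂̄` -/
  pdb : Ω →ₗ[ℂ] Ω
  pd_mem : ∀ {p q} {a : Ω}, a ∈ deg p q → pd a ∈ deg (p + 1) q
  pdb_mem : ∀ {p q} {a : Ω}, a ∈ deg p q → pdb a ∈ deg p (q + 1)
  pd_pd : ∀ a : Ω, pd (pd a) = 0
  pdb_pdb : ∀ a : Ω, pdb (pdb a) = 0
  pd_pdb : ∀ a : Ω, pd (pdb a) + pdb (pd a) = 0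
  pd_leibniz : ∀ {p q} (a b : Ω), a ∈ deg p q →
    pd (a * b) = pd a * b + ((-1 : ℂ) ^ (p + q)) • (a * pd b)
  pdb_leibniz : ∀ {p q} (a b : Ω), a ∈ deg p q →
    pdb (a * b) = pdb a * b + ((-1 : ℂ) ^ (p + q)) • (a * pdb b)

namespace DolbeaultAlgebra

variable {Ω : Type*} [Ring Ω] [Algebra ℂ Ω] {r : ℕ}

/-- the entrywise extension of `∂` to `r × r` matrices over `Ω` -/
def mpd (A : DolbeaultAlgebra Ω) (M : Matrix (Fin r) (Fin r) Ω) :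
    Matrix (Fin r) (Fin r) Ω := M.map A.pd

/-- the entrywise extension of `∂̄` to `r × r` matrices over `Ω` -/
def mpdb (A : DolbeaultAlgebra Ω) (M : Matrix (Fin r) (Fin r) Ω) :
    Matrix (Fin r) (Fin r) Ω := M.map A.pdb

/-- the assertion that all entries of a matrix lie in `Ω^{p,q}` -/
def MatDeg (A : DolbeaultAlgebra Ω) (p q : ℕ) (M : Matrix (Fin r) (Fin r) Ω) : Prop :=
  ∀ i j, M i j ∈ A.deg p q

end DolbeaultAlgebra

variable {Ω : Type*} [Ring Ω] [Algebra ℂ Ω]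

/-!
Let `β = b ∂̄(b⁻¹) = -θ̄₁`. In the frame obtained by the gauge transformation `b`, the Chern
connection of `h = cb` becomes `∂ + ∂̄ + θ₂ + β`, whose parts of type `(1,0)` and `(0,1)` are both
flat. Its curvature is therefore `F = U + ∂̄_β θ₂` with `U = ∂β` and `∂̄_β = ∂̄ + [β, ·]`. Both
`F` and `U` are `∂̄_β`-closed, and `∂̄ ∘ Tr = Tr ∘ ∂̄_β`, so

  `∂̄ Tr(θ₂(F + U)) = Tr((F - U)(F + U)) = Tr(F²) - Tr(U²)`.

The matrix `U` is strictly upper triangular, so `Tr(U²) = 0`. The Maurer–Cartan equation for `θ₂`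
gives `Tr(θ₂(F + U)) = Tr(θ₂ ∂̄θ₂) + 2 ∂Tr(θ₂θ̄₁)`, and `Tr(θ₂ ∂̄θ₂) = ∂Tr(θ₂θ̄₂)` because the
error term `Tr(θ₂²θ̄₂)` only involves the diagonals of lower triangular matrices, where
`(θ₂)ᵢᵢ² = 0`.
-/

theorem mul_apply_self_of_blockTriangular {R m ι : Type*} [NonUnitalNonAssocSemiring R] [Fintype m]
    [LinearOrder ι] {M N : Matrix m m R} {f : m → ι} (hf : f.Injective)
    (hM : M.BlockTriangular f) (hN : N.BlockTriangular f) (i : m) :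
    (M * N) i i = M i i * N i i := by
  rw [Matrix.mul_apply]
  refine Fintype.sum_eq_single i fun k hki => ?_
  rcases lt_or_gt_of_ne (hf.ne hki) with hk | hk
  · rw [hM hk, zero_mul]
  · rw [hN hk, mul_zero]

namespace DolbeaultAlgebra

/-- The complex conjugate Dolbeault algebra, with the two gradings and the operators `∂`, `∂̄`
interchanged. It transfers statements about `∂` to statements about `∂̄`. -/
def conj (A : DolbeaultAlgebra Ω) : DolbeaultAlgebra Ω where
  deg p q := A.deg q p
  one_mem := A.one_mem
  mul_mem := A.mul_mem
  gcomm {p q p' q'} a b ha hb := by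
    rw [add_comm p, add_comm p']
    exact A.gcomm a b ha hb
  pd := A.pdb
  pdb := A.pd
  pd_mem := A.pdb_mem
  pdb_mem := A.pd_mem
  pd_pd := A.pdb_pdb
  pdb_pdb := A.pd_pd
  pd_pdb a := by rw [add_comm]; exact A.pd_pdb a
  pd_leibniz {p q} a b ha := by
    rw [add_comm p]
    exact A.pdb_leibniz a b ha
  pdb_leibniz {p q} a b ha := by
    rw [add_comm p]
    exact A.pd_leibniz a b ha

section Matrices

variable {r : ℕ} {A : DolbeaultAlgebra Ω} {p q p' q' : ℕ} {M N : Matrix (Fin r) (Fin r) Ω}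

theorem MatDeg.conj (hM : A.MatDeg p q M) : A.conj.MatDeg q p M := hM

theorem MatDeg.add (hM : A.MatDeg p q M) (hN : A.MatDeg p q N) : A.MatDeg p q (M + N) :=
  fun i j => Submodule.add_mem _ (hM i j) (hN i j)

theorem MatDeg.mul (hM : A.MatDeg p q M) (hN : A.MatDeg p' q' N) :
    A.MatDeg (p + p') (q + q') (M * N) :=
  fun i j => by
    rw [Matrix.mul_apply]
    exact Submodule.sum_mem _ fun k _ => A.mul_mem (hM i k) (hN k j)

theorem MatDeg.mpd (hM : A.MatDeg p q M) : A.MatDeg (p + 1) q (A.mpd M) :=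
  fun i j => A.pd_mem (hM i j)

theorem MatDeg.mpdb (hM : A.MatDeg p q M) : A.MatDeg p (q + 1) (A.mpdb M) :=
  fun i j => A.pdb_mem (hM i j)

variable (A M N)

theorem mpd_add : A.mpd (M + N) = A.mpd M + A.mpd N := map_add A.pd.mapMatrix M N

theorem mpd_neg : A.mpd (-M) = -A.mpd M := map_neg A.pd.mapMatrix M

theorem mpd_mpd : A.mpd (A.mpd M) = 0 := Matrix.ext fun i j => A.pd_pd (M i j)

theorem mpd_mpdb : A.mpd (A.mpdb M) = -A.mpdb (A.mpd M) :=
  Matrix.ext fun i j => eq_neg_of_add_eq_zero_left (A.pd_pdb (M i j))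

theorem pd_one : A.pd 1 = 0 := by
  simpa using A.pd_leibniz 1 1 A.one_mem

theorem pdb_one : A.pdb 1 = 0 := A.conj.pd_one

theorem mpd_one : A.mpd (1 : Matrix (Fin r) (Fin r) Ω) = 0 := by
  ext i j
  by_cases hij : i = j <;> simp [mpd, hij, A.pd_one]

theorem pd_trace : A.pd M.trace = (A.mpd M).trace := AddMonoidHom.map_trace A.pd M

variable {A M}

theorem mpd_mul (hM : A.MatDeg p q M) :
    A.mpd (M * N) = A.mpd M * N + (-1 : ℂ) ^ (p + q) • (M * A.mpd N) := by
  ext i j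
  simp only [mpd, Matrix.map_apply, Matrix.mul_apply, Matrix.add_apply, Matrix.smul_apply,
    map_sum, Finset.smul_sum, ← Finset.sum_add_distrib]
  exact Finset.sum_congr rfl fun k _ => A.pd_leibniz _ _ (hM i k)

variable (A M)

theorem mpdb_add : A.mpdb (M + N) = A.mpdb M + A.mpdb N := A.conj.mpd_add M N

theorem mpdb_neg : A.mpdb (-M) = -A.mpdb M := A.conj.mpd_neg M

theorem mpdb_smul (z : ℂ) : A.mpdb (z • M) = z • A.mpdb M := map_smul A.pdb.mapMatrix z M

theorem mpdb_mpdb : A.mpdb (A.mpdb M) = 0 := A.conj.mpd_mpd M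

theorem pdb_trace : A.pdb M.trace = (A.mpdb M).trace := A.conj.pd_trace M

variable {A M}

theorem mpdb_mul (hM : A.MatDeg p q M) :
    A.mpdb (M * N) = A.mpdb M * N + (-1 : ℂ) ^ (p + q) • (M * A.mpdb N) := by
  rw [add_comm p]
  exact mpd_mul N hM.conj

variable {N}

theorem trace_mul_gcomm (hM : A.MatDeg p q M) (hN : A.MatDeg p' q' N) :
    (M * N).trace = (-1 : ℂ) ^ ((p + q) * (p' + q')) • (N * M).trace := by
  simp only [Matrix.trace, Matrix.diag_apply, Matrix.mul_apply, Finset.smul_sum]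
  rw [Finset.sum_comm]
  exact Finset.sum_congr rfl fun i _ => Finset.sum_congr rfl fun j _ =>
    A.gcomm _ _ (hM j i) (hN i j)

theorem mul_self_eq_zero_of_odd {x : Ω} (hx : x ∈ A.deg p q) (hodd : Odd (p + q)) :
    x * x = 0 := by
  have hneg : x * x = -(x * x) := by
    simpa [(hodd.mul hodd).neg_one_pow] using A.gcomm x x hx hx
  have : IsAddTorsionFree Ω := .of_isTorsionFree ℂ Ω
  exact self_eq_neg.mp hneg

end Matrices

section Triangular

variable (A : DolbeaultAlgebra Ω) {r : ℕ} {M N : Matrix (Fin r) (Fin r) Ω}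

/-- The commutative algebra `Ω^{0,0}` of functions, over which inverses of matrices can be computed
by means of determinants. -/
def functions : Subalgebra ℂ Ω where
  carrier := A.deg 0 0
  mul_mem' := A.mul_mem
  add_mem' := (A.deg 0 0).add_mem
  algebraMap_mem' z := by
    rw [Algebra.algebraMap_eq_smul_one]
    exact (A.deg 0 0).smul_mem z A.one_mem

instance : CommRing A.functions where
  mul_comm x y := Subtype.ext <| by simpa using A.gcomm x.1 y.1 x.2 y.2

variable {A}

theorem blockTriangular_of_mul_eq_one {ι : Type*} [LinearOrder ι] {f : Fin r → ι}
    (hM : A.MatDeg 0 0 M) (hN : A.MatDeg 0 0 N) (htri : M.BlockTriangular f) (hMN : M * N = 1) :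
    N.BlockTriangular f := by
  let M' : Matrix (Fin r) (Fin r) A.functions := .of fun i j => ⟨M i j, hM i j⟩
  let N' : Matrix (Fin r) (Fin r) A.functions := .of fun i j => ⟨N i j, hN i j⟩
  have hM' : M'.BlockTriangular f := fun i j hij => Subtype.ext (htri hij)
  have hMN' : M' * N' = 1 := by
    apply Matrix.map_injective (f := A.functions.val) Subtype.val_injective
    change A.functions.val.mapMatrix (M' * N') = A.functions.val.mapMatrix 1
    rw [map_mul, map_one]
    exact hMN
  have := invertibleOfRightInverse M' N' hMN'
  have hN' : N'.BlockTriangular f :=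
    Matrix.inv_eq_right_inv hMN' ▸ Matrix.blockTriangular_inv_of_blockTriangular hM'
  exact hN'.map A.functions.val

end Triangular

section CovariantDerivative

variable {r : ℕ} {A : DolbeaultAlgebra Ω} {p q p' q' n : ℕ} {M N β : Matrix (Fin r) (Fin r) Ω}

/-- The covariant derivative `∂̄ + [β, ·]` (graded commutator) of endomorphism-valued forms defined
by a matrix `β` of `(0,1)`-forms. The total degree `n` of the argument, which determines the sign of
the commutator, is passed explicitly. -/
def covPdb (A : DolbeaultAlgebra Ω) (β : Matrix (Fin r) (Fin r) Ω) (n : ℕ)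
    (M : Matrix (Fin r) (Fin r) Ω) : Matrix (Fin r) (Fin r) Ω :=
  A.mpdb M + β * M - (-1 : ℂ) ^ n • (M * β)

theorem covPdb_add : A.covPdb β n (M + N) = A.covPdb β n M + A.covPdb β n N := by
  simp only [covPdb, mpdb_add, mul_add, add_mul]
  module

theorem covPdb_mul (hM : A.MatDeg p q M) :
    A.covPdb β (p + q + n) (M * N) =
      A.covPdb β (p + q) M * N + (-1 : ℂ) ^ (p + q) • (M * A.covPdb β n N) := by
  simp only [covPdb, mpdb_mul N hM, mul_add, add_mul, mul_sub, sub_mul, smul_mul_assoc,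
    mul_smul_comm, mul_assoc]
  module

theorem pdb_trace_eq_trace_covPdb (hM : A.MatDeg p q M) (hβ : A.MatDeg 0 1 β) :
    A.pdb M.trace = (A.covPdb β (p + q) M).trace := by
  have hcomm : (β * M).trace = (-1 : ℂ) ^ (p + q) • (M * β).trace := by
    simpa using trace_mul_gcomm hβ hM
  rw [covPdb, Matrix.trace_sub, Matrix.trace_add, Matrix.trace_smul, hcomm, add_sub_cancel_right,
    pdb_trace]

theorem covPdb_covPdb (hM : A.MatDeg p q M) (hβ : A.MatDeg 0 1 β)
    (hflat : A.mpdb β = -(β * β)) :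
    A.covPdb β (p + q + 1) (A.covPdb β (p + q) M) = 0 := by
  simp only [covPdb, sub_eq_add_neg, mpdb_add, mpdb_neg, mpdb_smul, mpdb_mpdb, mpdb_mul M hβ,
    mpdb_mul β hM, hflat, mul_add, add_mul, mul_neg, neg_mul, smul_mul_assoc, mul_smul_comm,
    mul_assoc]
  module

theorem covPdb_mpd_self (hβ : A.MatDeg 0 1 β) (hflat : A.mpdb β = -(β * β)) :
    A.covPdb β 2 (A.mpd β) = 0 := by
  have hmixed : A.mpdb (A.mpd β) = A.mpd β * β - β * A.mpd β := by
    rw [← neg_neg (A.mpdb _), ← mpd_mpdb, hflat, mpd_neg, mpd_mul β hβ]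
    simp [sub_eq_add_neg]
  rw [covPdb, hmixed]
  simp

theorem pdb_trace_mul (hM : A.MatDeg p q M) (hN : A.MatDeg p' q' N) (hβ : A.MatDeg 0 1 β)
    (hN0 : A.covPdb β (p' + q') N = 0) :
    A.pdb (M * N).trace = (A.covPdb β (p + q) M * N).trace := by
  rw [pdb_trace_eq_trace_covPdb (hM.mul hN) hβ, add_add_add_comm, covPdb_mul hM, hN0, mul_zero,
    smul_zero, add_zero]

end CovariantDerivative

section Curvature

variable {r : ℕ} {A : DolbeaultAlgebra Ω} {α β : Matrix (Fin r) (Fin r) Ω}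

/-- The `(1,1)`-part `∂β + ∂̄α + αβ + βα` of the curvature of the connection `∂ + ∂̄ + α + β`, where
`α` and `β` are matrices of `(1,0)`-forms and `(0,1)`-forms. -/
def curvature (A : DolbeaultAlgebra Ω) (α β : Matrix (Fin r) (Fin r) Ω) :
    Matrix (Fin r) (Fin r) Ω :=
  A.mpd β + A.covPdb β 1 α

theorem curvature_eq :
    A.curvature α β = A.mpd β + A.mpdb α + (α * β + β * α) := by
  simp only [curvature, covPdb, pow_one]
  module

theorem matDeg_curvature (hα : A.MatDeg 1 0 α) (hβ : A.MatDeg 0 1 β) :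
    A.MatDeg 1 1 (A.curvature α β) := by
  rw [curvature_eq]
  exact (hβ.mpd.add hα.mpdb).add ((hα.mul hβ).add (hβ.mul hα))

theorem covPdb_curvature (hα : A.MatDeg 1 0 α) (hβ : A.MatDeg 0 1 β)
    (hflat : A.mpdb β = -(β * β)) : A.covPdb β 2 (A.curvature α β) = 0 := by
  rw [curvature, covPdb_add, covPdb_mpd_self hβ hflat, zero_add]
  exact covPdb_covPdb (p := 1) (q := 0) hα hβ hflat

theorem trace_curvature_mul_self (hα : A.MatDeg 1 0 α) (hβ : A.MatDeg 0 1 β)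
    (hflat : A.mpdb β = -(β * β)) :
    (A.curvature α β * A.curvature α β).trace =
      (A.mpd β * A.mpd β).trace + A.pdb (α * (A.curvature α β + A.mpd β)).trace := by
  have hdeg := matDeg_curvature hα hβ
  have hcov : A.covPdb β (1 + 0) α = A.curvature α β - A.mpd β := (add_sub_cancel_left _ _).symm
  have hzero : A.covPdb β (1 + 1) (A.curvature α β + A.mpd β) = 0 := by
    rw [covPdb_add, covPdb_curvature hα hβ hflat, covPdb_mpd_self hβ hflat, add_zero]
  have hcomm : (A.mpd β * A.curvature α β).trace = (A.curvature α β * A.mpd β).trace := by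
    rw [trace_mul_gcomm hβ.mpd hdeg]
    norm_num
  rw [pdb_trace_mul hα (hdeg.add hβ.mpd) hβ hzero, hcov]
  simp only [mul_add, sub_mul, Matrix.trace_add, Matrix.trace_sub, hcomm]
  abel

theorem trace_mul_curvature_add (hα : A.MatDeg 1 0 α) (hβ : A.MatDeg 0 1 β)
    (hflat : A.mpd α = -(α * α)) :
    (α * (A.curvature α β + A.mpd β)).trace =
      (α * A.mpdb α).trace - (2 : ℂ) • A.pd (α * β).trace := by
  have hcomm : (α * (β * α)).trace = (α * (α * β)).trace := by
    rw [← mul_assoc]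
    simpa using trace_mul_gcomm (hα.mul hβ) hα
  rw [pd_trace, mpd_mul β hα, hflat, curvature_eq]
  simp only [mul_add, neg_mul, mul_assoc, Matrix.trace_add, Matrix.trace_neg, Matrix.trace_smul,
    hcomm, add_zero, pow_one]
  module

end Curvature

section LogarithmicDerivative

variable {r : ℕ} {A : DolbeaultAlgebra Ω} {g ginv : Matrix (Fin r) (Fin r) Ω}

theorem mpd_inv (hginv : A.MatDeg 0 0 ginv) (hl : ginv * g = 1) (hr : g * ginv = 1) :
    A.mpd ginv = -(ginv * A.mpd g * ginv) := by
  have hsum : A.mpd ginv * g + ginv * A.mpd g = 0 := by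
    simpa [hl, mpd_one] using (mpd_mul g hginv).symm
  rw [← neg_mul, ← eq_neg_of_add_eq_zero_left hsum, mul_assoc, hr, mul_one]

theorem mpdb_inv (hginv : A.MatDeg 0 0 ginv) (hl : ginv * g = 1) (hr : g * ginv = 1) :
    A.mpdb ginv = -(ginv * A.mpdb g * ginv) :=
  mpd_inv hginv.conj hl hr

theorem mpd_logDeriv (hginv : A.MatDeg 0 0 ginv) (hl : ginv * g = 1) (hr : g * ginv = 1) :
    A.mpd (ginv * A.mpd g) = -(ginv * A.mpd g * (ginv * A.mpd g)) := by
  rw [mpd_mul _ hginv, mpd_inv hginv hl hr, mpd_mpd]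
  simp [mul_assoc]

theorem mpdb_logDeriv (hginv : A.MatDeg 0 0 ginv) (hl : ginv * g = 1) (hr : g * ginv = 1) :
    A.mpdb (ginv * A.mpdb g) = -(ginv * A.mpdb g * (ginv * A.mpdb g)) :=
  mpd_logDeriv hginv.conj hl hr

theorem mpd_logDeriv_mpdb (hginv : A.MatDeg 0 0 ginv) (hl : ginv * g = 1) (hr : g * ginv = 1) :
    A.mpd (ginv * A.mpdb g) = -A.mpdb (ginv * A.mpd g) -
      (ginv * A.mpd g * (ginv * A.mpdb g) + ginv * A.mpdb g * (ginv * A.mpd g)) := by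
  rw [mpd_mul _ hginv, mpdb_mul _ hginv, mpd_inv hginv hl hr, mpdb_inv hginv hl hr, mpd_mpdb]
  simp only [add_zero, pow_zero, one_smul]
  noncomm_ring

theorem pd_trace_logDeriv_mul (hg : A.MatDeg 0 0 g) (hginv : A.MatDeg 0 0 ginv)
    (hl : ginv * g = 1) (hr : g * ginv = 1) :
    A.pd (ginv * A.mpd g * (ginv * A.mpdb g)).trace =
      (ginv * A.mpd g * A.mpdb (ginv * A.mpd g)).trace +
        (ginv * A.mpd g * (ginv * A.mpd g) * (ginv * A.mpdb g)).trace := by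
  rw [pd_trace, mpd_mul _ (hginv.mul hg.mpd), mpd_logDeriv hginv hl hr,
    mpd_logDeriv_mpdb hginv hl hr]
  have hθ : A.MatDeg 1 0 (ginv * A.mpd g) := hginv.mul hg.mpd
  have hθb : A.MatDeg 0 1 (ginv * A.mpdb g) := hginv.mul hg.mpdb
  generalize ginv * A.mpd g = θ at *
  generalize ginv * A.mpdb g = θb at *
  have hcomm : (θ * (θb * θ)).trace = (θ * (θ * θb)).trace := by
    rw [← mul_assoc]
    simpa using trace_mul_gcomm (hθ.mul hθb) hθ
  simp only [mul_add, mul_sub, mul_neg, neg_mul, mul_assoc, Matrix.trace_add, Matrix.trace_sub,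
    Matrix.trace_neg, Matrix.trace_smul, hcomm, add_zero, zero_add, pow_one]
  module

end LogarithmicDerivative

section Cholesky

variable {r : ℕ} {A : DolbeaultAlgebra Ω} {p q : ℕ}
  {b binv c cinv : Matrix (Fin r) (Fin r) Ω}

theorem mpdb_conjugate {M : Matrix (Fin r) (Fin r) Ω} (hbinv : A.MatDeg 0 0 binv)
    (hb : A.MatDeg 0 0 b) (hl : binv * b = 1) (hr : b * binv = 1) (hM : A.MatDeg p q M) :
    A.mpdb (binv * M * b) = binv * A.covPdb (b * A.mpdb binv) (p + q) M * b := by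
  have hdb : A.mpdb b = -(b * A.mpdb binv * b) := mpdb_inv hb hr hl
  have hcancel (N : Matrix (Fin r) (Fin r) Ω) : binv * (b * N) = N := by
    rw [← mul_assoc, hl, one_mul]
  rw [mpdb_mul _ (hbinv.mul hM), mpdb_mul _ hbinv, hdb, covPdb]
  simp only [add_zero, zero_add, pow_zero, one_smul, mul_add, add_mul, mul_sub, sub_mul, mul_neg,
    smul_neg, mul_smul_comm, smul_mul_assoc, mul_assoc, hcancel]
  abel

theorem mpdb_logDeriv_eq_conjugate (hbinv : A.MatDeg 0 0 binv) (hb : A.MatDeg 0 0 b)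
    (hl : binv * b = 1) (hr : b * binv = 1) :
    A.mpdb (binv * A.mpd b) = binv * A.mpd (b * A.mpdb binv) * b := by
  have hlog : binv * A.mpd b = -(A.mpd binv * b) := by
    rw [mpd_inv hb hr hl]
    simp only [mul_neg, ← mul_assoc, hl, one_mul]
  calc
    A.mpdb (binv * A.mpd b) = -(A.mpdb (A.mpd binv) * b) + A.mpd binv * A.mpdb b := by
      rw [hlog, mpdb_neg, mpdb_mul b hbinv.mpd]
      simp [add_comm]
    _ = A.mpd (A.mpdb binv) * b + binv * A.mpd b * A.mpdb binv * b := by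
      rw [hlog, mpdb_inv hb hr hl, mpd_mpdb]
      noncomm_ring
    _ = binv * A.mpd (b * A.mpdb binv) * b := by
      rw [mpd_mul _ hb]
      simp only [add_zero, pow_zero, one_smul, mul_add, add_mul, ← mul_assoc, hl, one_mul]
      abel

theorem mpdb_chernConnection (hc : A.MatDeg 0 0 c) (hcinv : A.MatDeg 0 0 cinv) (hb : A.MatDeg 0 0 b)
    (hbinv : A.MatDeg 0 0 binv) (hcl : cinv * c = 1) (hl : binv * b = 1) (hr : b * binv = 1) :
    A.mpdb (binv * cinv * A.mpd (c * b)) =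
      binv * A.curvature (cinv * A.mpd c) (b * A.mpdb binv) * b := by
  have hsplit : binv * cinv * A.mpd (c * b) = binv * A.mpd b + binv * (cinv * A.mpd c) * b := by
    rw [mpd_mul b hc, add_comm]
    simp only [add_zero, pow_zero, one_smul, mul_add, mul_assoc]
    rw [← mul_assoc cinv c, hcl, one_mul]
  rw [hsplit, mpdb_add, mpdb_logDeriv_eq_conjugate hbinv hb hl hr,
    mpdb_conjugate hbinv hb hl hr (hcinv.mul hc.mpd), curvature, mul_add, add_mul]

theorem trace_conjugate {M : Matrix (Fin r) (Fin r) Ω} (hbinv : A.MatDeg 0 0 binv)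
    (hb : A.MatDeg 0 0 b) (hr : b * binv = 1) (hM : A.MatDeg p q M) :
    (binv * M * b).trace = M.trace := by
  rw [mul_assoc, trace_mul_gcomm hbinv (hM.mul hb), mul_assoc, hr]
  simp

theorem trace_mpdb_chernConnection_sq (hc : A.MatDeg 0 0 c) (hcinv : A.MatDeg 0 0 cinv)
    (hb : A.MatDeg 0 0 b) (hbinv : A.MatDeg 0 0 binv) (hcl : cinv * c = 1)
    (hl : binv * b = 1) (hr : b * binv = 1) :
    (A.mpdb (binv * cinv * A.mpd (c * b)) ^ 2).trace =
      (A.curvature (cinv * A.mpd c) (b * A.mpdb binv) *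
        A.curvature (cinv * A.mpd c) (b * A.mpdb binv)).trace := by
  have hF := matDeg_curvature (hcinv.mul hc.mpd) (hb.mul hbinv.mpdb)
  rw [mpdb_chernConnection hc hcinv hb hbinv hcl hl hr, ← trace_conjugate hbinv hb hr (hF.mul hF)]
  congr 1
  simp only [pow_two, mul_assoc]
  rw [← mul_assoc b binv, hr, one_mul]

theorem trace_mpd_logDeriv_mul_self_eq_zero (hb : A.MatDeg 0 0 b) (hbinv : A.MatDeg 0 0 binv)
    (htri : b.IsUpperTriangular) (hdiag : ∀ i, b i i = 1) (hr : b * binv = 1) :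
    (A.mpd (b * A.mpdb binv) * A.mpd (b * A.mpdb binv)).trace = 0 := by
  have hbinvtri : binv.IsUpperTriangular := blockTriangular_of_mul_eq_one hb hbinv htri hr
  have hdbinv : (A.mpdb binv).IsUpperTriangular := hbinvtri.map A.pdb
  have hU : (A.mpd (b * A.mpdb binv)).IsUpperTriangular := (htri.mul hdbinv).map A.pd
  have hbinvdiag (i : Fin r) : binv i i = 1 := by
    simpa [hdiag, hr] using
      (mul_apply_self_of_blockTriangular Function.injective_id htri hbinvtri i).symm
  have hUdiag (i : Fin r) : A.mpd (b * A.mpdb binv) i i = 0 := by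
    have hdbinvdiag : A.mpdb binv i i = 0 := by
      rw [mpdb, Matrix.map_apply, hbinvdiag, A.pdb_one]
    rw [mpd, Matrix.map_apply, mul_apply_self_of_blockTriangular Function.injective_id htri hdbinv,
      hdbinvdiag, mul_zero, map_zero]
  refine Finset.sum_eq_zero fun i _ => ?_
  rw [Matrix.diag_apply, mul_apply_self_of_blockTriangular Function.injective_id hU hU, hUdiag,
    mul_zero]

theorem trace_logDeriv_sq_mul_eq_zero (hc : A.MatDeg 0 0 c) (hcinv : A.MatDeg 0 0 cinv)
    (htri : c.IsLowerTriangular) (hr : c * cinv = 1) :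
    (cinv * A.mpd c * (cinv * A.mpd c) * (cinv * A.mpdb c)).trace = 0 := by
  have hcinvtri : cinv.IsLowerTriangular := blockTriangular_of_mul_eq_one hc hcinv htri hr
  have hθ : (cinv * A.mpd c).IsLowerTriangular := hcinvtri.mul (htri.map A.pd)
  have hθb : (cinv * A.mpdb c).IsLowerTriangular := hcinvtri.mul (htri.map A.pdb)
  have hdeg : A.MatDeg 1 0 (cinv * A.mpd c) := hcinv.mul hc.mpd
  refine Finset.sum_eq_zero fun i _ => ?_
  have hinj : Function.Injective (OrderDual.toDual : Fin r → (Fin r)ᵒᵈ) :=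
    OrderDual.toDual.injective
  rw [Matrix.diag_apply, mul_apply_self_of_blockTriangular hinj (hθ.mul hθ) hθb,
    mul_apply_self_of_blockTriangular hinj hθ hθ, mul_self_eq_zero_of_odd (hdeg i i) odd_one,
    zero_mul]

theorem trace_logDeriv_mul_mpdb (hc : A.MatDeg 0 0 c) (hcinv : A.MatDeg 0 0 cinv)
    (htri : c.IsLowerTriangular) (hl : cinv * c = 1) (hr : c * cinv = 1) :
    (cinv * A.mpd c * A.mpdb (cinv * A.mpd c)).trace =
      A.pd (cinv * A.mpd c * (cinv * A.mpdb c)).trace := by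
  rw [pd_trace_logDeriv_mul hc hcinv hl hr, trace_logDeriv_sq_mul_eq_zero hc hcinv htri hr,
    add_zero]

end Cholesky

end DolbeaultAlgebra

open DolbeaultAlgebra

/-- (Proposition: the second Bott–Chern form) In the Cholesky setting,
`Tr(BΘ²) = ∂̄∂Tr(2θ₂θ̄₁ + θ₂θ̄₂)`; equivalently, `ch₂ = (1/2)Tr(BΘ²)` satisfies
`ch₂ = ∂̄∂bc₂` with `bc₂ = (1/2)Tr(2θ₂θ̄₁ + θ₂θ̄₂)`. -/
theorem stmt16
    (A : DolbeaultAlgebra Ω) (r : ℕ) (hr : 1 ≤ r)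
    (b c binv cinv : Matrix (Fin r) (Fin r) Ω)
    (hbdeg : A.MatDeg 0 0 b) (hcdeg : A.MatDeg 0 0 c)
    (hbinvdeg : A.MatDeg 0 0 binv) (hcinvdeg : A.MatDeg 0 0 cinv)
    (hbu : ∀ i j : Fin r, j < i → b i j = 0) (hbd : ∀ i : Fin r, b i i = 1)
    (hcl : ∀ i j : Fin r, i < j → c i j = 0)
    (hbinvl : binv * b = 1) (hbinvr : b * binv = 1)
    (hcinvl : cinv * c = 1) (hcinvr : c * cinv = 1)
    (h hinv : Matrix (Fin r) (Fin r) Ω) (hh : h = c * b) (hhinv : hinv = binv * cinv)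
    (θ₁ θ₂ θ θb₁ θb₂ θb : Matrix (Fin r) (Fin r) Ω)
    (hθ₁ : θ₁ = A.mpd b * binv) (hθ₂ : θ₂ = cinv * A.mpd c) (hθ : θ = θ₁ + θ₂)
    (hθb₁ : θb₁ = A.mpdb b * binv) (hθb₂ : θb₂ = cinv * A.mpdb c) (hθb : θb = θb₁ + θb₂)
    (Bθ Bθb BΘ : Matrix (Fin r) (Fin r) Ω)
    (hBθ : Bθ = hinv * A.mpd h) (hBθb : Bθb = hinv * A.mpdb h) (hBΘ : BΘ = A.mpdb Bθ) :
    Matrix.trace (BΘ ^ 2) =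
      A.pdb (A.pd (Matrix.trace ((2 : ℂ) • (θ₂ * θb₁) + θ₂ * θb₂))) ∧
    (1 / 2 : ℂ) • Matrix.trace (BΘ ^ 2) =
      A.pdb (A.pd ((1 / 2 : ℂ) • Matrix.trace ((2 : ℂ) • (θ₂ * θb₁) + θ₂ * θb₂))) := by
  let β := b * A.mpdb binv
  let F := A.curvature θ₂ β
  have hα : A.MatDeg 1 0 θ₂ := hθ₂ ▸ hcinvdeg.mul hcdeg.mpd
  have hβ : A.MatDeg 0 1 β := hbdeg.mul hbinvdeg.mpdb
  have hflatα : A.mpd θ₂ = -(θ₂ * θ₂) := hθ₂ ▸ mpd_logDeriv hcinvdeg hcinvl hcinvr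
  have hflatβ : A.mpdb β = -(β * β) := mpdb_logDeriv hbdeg hbinvr hbinvl
  have hθb₁_eq : θb₁ = -β := by
    rw [hθb₁, mpdb_inv hbdeg hbinvr hbinvl, neg_mul, mul_assoc, hbinvr, mul_one]
  have hbc : (BΘ ^ 2).trace = A.pdb (A.pd ((2 : ℂ) • (θ₂ * θb₁) + θ₂ * θb₂).trace) := calc
    (BΘ ^ 2).trace = (F * F).trace := by
      subst hBΘ hBθ hhinv hh hθ₂
      exact trace_mpdb_chernConnection_sq hcdeg hcinvdeg hbdeg hbinvdeg hcinvl hbinvl hbinvr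
    _ = A.pdb (θ₂ * (F + A.mpd β)).trace := by
      rw [trace_curvature_mul_self hα hβ hflatβ,
        trace_mpd_logDeriv_mul_self_eq_zero hbdeg hbinvdeg hbu hbd hbinvr, zero_add]
    _ = A.pdb (A.pd ((2 : ℂ) • (θ₂ * θb₁) + θ₂ * θb₂).trace) := by
      rw [trace_mul_curvature_add hα hβ hflatα, hθ₂, hθb₂,
        trace_logDeriv_mul_mpdb hcdeg hcinvdeg hcl hcinvl hcinvr, hθb₁_eq]
      simp [sub_eq_neg_add]
  exact ⟨hbc, by rw [hbc, map_smul, map_smul]⟩
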